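/- Let K be the reference tetrahedron in ℝ³, let p ≥ 1 be an integer, and let v ∈ P_{p−1} be a polynomial of degree at most p−1. Suppose that ∫_K v · div Φ dx = 0 for every vector polynomial Φ ∈ (P_p)³ whose normal component vanishes on each face of K. Then v is constant on K. -/

import Mathlib

open MeasureTheory MvPolynomial Real

noncomputable section

/-- Vertices of the reference tetrahedron: v0=(0,0,0), v1=(1,0,0), v2=(0,1,0), v3=(0,0,1). -/
def vtx : Fin 4 → Fin 3 → ℝ :=
  ![![0,0,0], ![1,0,0], ![0,1,0], ![0,0,1]]

/-- Barycentric coordinates λ₀ = 1-x-y-z, λ₁ = x, λ₂ = y, λ₃ = z. -/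
def lam : Fin 4 → (Fin 3 → ℝ) → ℝ :=
  ![fun x => 1 - x 0 - x 1 - x 2, fun x => x 0, fun x => x 1, fun x => x 2]

/-- The reference tetrahedron K = {x : λ_j(x) ≥ 0 for all j}. -/
def Ktet : Set (Fin 3 → ℝ) := {x | ∀ j : Fin 4, 0 ≤ lam j x}

/-- Face F_j = {x ∈ K : λ_j(x) = 0}. -/
def faceK (j : Fin 4) : Set (Fin 3 → ℝ) := {x ∈ Ktet | lam j x = 0}

/-- Outward unit normals of the four faces of K. -/
def normalK : Fin 4 → Fin 3 → ℝ :=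
  ![fun _ => 1 / Real.sqrt 3, ![-1,0,0], ![0,-1,0], ![0,0,-1]]

/-- (Constant) gradients of the barycentric coordinates. -/
def gradLam : Fin 4 → Fin 3 → ℝ :=
  ![![-1,-1,-1], ![1,0,0], ![0,1,0], ![0,0,1]]

/-- Divergence of a vector polynomial. -/
def divP (Φ : Fin 3 → MvPolynomial (Fin 3) ℝ) : MvPolynomial (Fin 3) ℝ :=
  ∑ i, MvPolynomial.pderiv i (Φ i)

/-- The normal component of the vector polynomial Φ vanishes on every face of K. -/
def normalVanish (Φ : Fin 3 → MvPolynomial (Fin 3) ℝ) : Prop :=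
  ∀ j : Fin 4, ∀ q ∈ faceK j, ∑ i, MvPolynomial.eval q (Φ i) * normalK j i = 0

/-- Divergence of a vector field (as a function). -/
def divF (Φ : (Fin 3 → ℝ) → (Fin 3 → ℝ)) (x : Fin 3 → ℝ) : ℝ :=
  ∑ i, fderiv ℝ Φ x (Pi.single i 1) i

/-- The normal component of the vector field Φ vanishes on every face of K. -/
def normalVanishF (Φ : (Fin 3 → ℝ) → (Fin 3 → ℝ)) : Prop :=
  ∀ j : Fin 4, ∀ q ∈ faceK j, ∑ i, Φ q i * normalK j i = 0

/-!
Write `λ₀ = 1 - ∑ j, x j` and test with the field `Φ` whose only nonzero component is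
`Φ i = x i * λ₀ * ∂ᵢ v`. Its normal component vanishes on the boundary, since `x i * λ₀` vanishes
on the face `x i = 0` and on the slanted face; its degree is at most `deg v + 1 ≤ p`. Integration
by parts in the direction `i` turns the orthogonality into `∫ x i * λ₀ * (∂ᵢ v)² = 0`, and the
weight is positive inside the simplex, so `∂ᵢ v = 0`. This holds for every `i`, in any dimension.
-/

section Polynomial

variable {σ R : Type*}

theorem totalDegree_pderiv_lt [CommSemiring R] {i : σ} {f : MvPolynomial σ R}
    (h : pderiv i f ≠ 0) : (pderiv i f).totalDegree < f.totalDegree := by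
  obtain ⟨m, hm, hdeg⟩ :=
    Finset.exists_mem_eq_sup _ (support_nonempty.2 h) fun m => m.sum fun _ e => e
  have hmem : m + Finsupp.single i 1 ∈ f.support := by
    rw [mem_support_iff, coeff_pderiv] at hm
    exact mem_support_iff.2 (left_ne_zero_of_mul hm)
  have hle := le_totalDegree hmem
  rw [Finsupp.sum_add_index' (by simp) (by simp), Finsupp.sum_single_index rfl] at hle
  exact hdeg.trans_lt (Nat.lt_of_succ_le hle)

theorem eq_C_of_pderiv_eq_zero [CommSemiring R] [NoZeroDivisors R] [CharZero R]
    {f : MvPolynomial σ R} (h : ∀ i, pderiv i f = 0) : f = C (coeff 0 f) := by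
  classical
  ext m
  rw [coeff_C]
  split_ifs with hm
  · rw [hm]
  · obtain ⟨i, hi⟩ : ∃ i, m i ≠ 0 := Finsupp.ne_iff.1 (Ne.symm hm)
    have hle : Finsupp.single i 1 ≤ m := Finsupp.single_le_iff.2 (Nat.one_le_iff_ne_zero.2 hi)
    have hcoeff := coeff_pderiv (i := i) f (m - Finsupp.single i 1)
    rw [h i, coeff_zero, tsub_add_cancel_of_le hle] at hcoeff
    exact (mul_eq_zero.1 hcoeff.symm).resolve_right (Nat.cast_add_one_ne_zero _)

theorem hasDerivAt_eval_update {𝕜 : Type*} [NontriviallyNormedField 𝕜] [DecidableEq σ]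
    (f : MvPolynomial σ 𝕜) (x : σ → 𝕜) (i : σ) (t : 𝕜) :
    HasDerivAt (fun s => eval (Function.update x i s) f)
      (eval (Function.update x i t) (pderiv i f)) t := by
  induction f using MvPolynomial.induction_on with
  | C a => simpa using hasDerivAt_const t a
  | add f g hf hg => simpa only [map_add] using hf.fun_add hg
  | mul_X f j hf =>
    have hX : HasDerivAt (fun s => Function.update x i s j)
        (eval (Function.update x i t) (pderiv i (X j))) t := by
      obtain rfl | hj := eq_or_ne j i
      · simpa using hasDerivAt_id' t
      · simpa [hj, pderiv_X_of_ne hj] using hasDerivAt_const t (x j)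
    simpa only [pderiv_mul, map_add, map_mul, eval_X] using hf.fun_mul hX

theorem eq_zero_of_eval_eq_zero_on_open {ι : Type*} [Finite ι] {f : MvPolynomial ι ℝ}
    {U : Set (ι → ℝ)} (hU : IsOpen U) (hne : U.Nonempty) (h : ∀ x ∈ U, eval x f = 0) : f = 0 := by
  have := Fintype.ofFinite ι
  obtain ⟨x, hx⟩ := hne
  obtain ⟨ε, hε, hball⟩ := Metric.isOpen_iff.1 hU x hx
  refine funext_set (fun j => Metric.ball (x j) ε) (fun j => ?_) fun y hy => ?_
  · rw [Real.ball_eq_Ioo]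
    exact Set.Ioo_infinite (by linarith)
  · rw [map_zero]
    exact h y (hball (by rwa [ball_pi x hε]))

theorem eq_zero_of_setIntegral_eval_eq_zero {ι : Type*} [Fintype ι] {f : MvPolynomial ι ℝ}
    {K : Set (ι → ℝ)} (hK : IsCompact K) (hne : (interior K).Nonempty)
    (hnonneg : ∀ x ∈ K, 0 ≤ eval x f) (h : ∫ x in K, eval x f = 0) : f = 0 := by
  have hcont : Continuous fun x => eval x f := f.continuous_eval
  rw [setIntegral_eq_zero_iff_of_nonneg_ae (ae_restrict_of_forall_mem hK.measurableSet hnonneg)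
    (hcont.continuousOn.integrableOn_compact hK)] at h
  exact eq_zero_of_eval_eq_zero_on_open isOpen_interior hne <|
    Measure.eqOn_open_of_ae_eq (ae_restrict_of_ae_restrict_of_subset interior_subset h)
      isOpen_interior hcont.continuousOn continuousOn_const

end Polynomial

section CornerSimplex

/-- The simplex in `ℝⁿ` whose vertices are the origin and the standard basis vectors, that is the
reference simplex of dimension `n`. -/
def cornerSimplex (n : ℕ) : Set (Fin n → ℝ) := {x | (∀ i, 0 ≤ x i) ∧ ∑ i, x i ≤ 1}

variable {n : ℕ}

theorem isClosed_cornerSimplex : IsClosed (cornerSimplex n) :=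
  isClosed_Ici.inter
    (isClosed_le (f := fun x : Fin n → ℝ => ∑ i, x i) (by fun_prop) continuous_const)

theorem isCompact_cornerSimplex : IsCompact (cornerSimplex n) :=
  (isCompact_Icc (a := 0) (b := 1)).of_isClosed_subset isClosed_cornerSimplex fun _ hx =>
    ⟨hx.1, fun i => (Finset.single_le_sum (fun j _ => hx.1 j) (Finset.mem_univ i)).trans hx.2⟩

theorem nonempty_interior_cornerSimplex : (interior (cornerSimplex n)).Nonempty := by
  have hopen : IsOpen {x : Fin n → ℝ | (∀ i, 0 < x i) ∧ ∑ i, x i < 1} := by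
    simp only [Set.ofPred_and, Set.ofPred_forall]
    exact (isOpen_iInter_of_finite fun i => isOpen_lt continuous_const (continuous_apply i)).inter
      (isOpen_lt (by fun_prop) continuous_const)
  refine ⟨fun _ => 1 / (n + 1), mem_interior.2
    ⟨_, fun x hx => ⟨fun i => (hx.1 i).le, hx.2.le⟩, hopen, fun _ => by positivity, ?_⟩⟩
  rw [Finset.sum_const, Finset.card_univ, Fintype.card_fin, nsmul_eq_mul, mul_one_div]
  exact (div_lt_one (by positivity)).2 (lt_add_one _)

theorem insertNth_mem_cornerSimplex {i : Fin (n + 1)} {t : ℝ} {y : Fin n → ℝ} :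
    (i.insertNth t y : Fin (n + 1) → ℝ) ∈ cornerSimplex (n + 1) ↔
      y ∈ cornerSimplex n ∧ t ∈ Set.Icc 0 (1 - ∑ k, y k) := by
  simp only [cornerSimplex, Set.mem_ofPred_eq, Fin.forall_iff_succAbove i,
    Fin.sum_univ_succAbove _ i, Fin.insertNth_apply_same, Fin.insertNth_apply_succAbove,
    Set.mem_Icc]
  constructor
  · rintro ⟨⟨ht, hy⟩, hsum⟩
    exact ⟨⟨hy, by linarith⟩, ht, by linarith⟩
  · rintro ⟨⟨hy, -⟩, ht, hsum⟩
    exact ⟨⟨ht, hy⟩, by linarith⟩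

theorem setIntegral_cornerSimplex_succ {E : Type*} [NormedAddCommGroup E] [NormedSpace ℝ E]
    (i : Fin (n + 1)) {f : (Fin (n + 1) → ℝ) → E} (hf : IntegrableOn f (cornerSimplex (n + 1))) :
    ∫ x in cornerSimplex (n + 1), f x =
      ∫ y in cornerSimplex n, ∫ t in (0 : ℝ)..1 - ∑ k, y k, f (i.insertNth t y) := by
  have hmeas (m : ℕ) : MeasurableSet (cornerSimplex m) := isClosed_cornerSimplex.measurableSet
  have hslice (y : Fin n → ℝ) :
      ∫ t, (cornerSimplex (n + 1)).indicator f (i.insertNth t y : Fin (n + 1) → ℝ) =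
        (cornerSimplex n).indicator
          (fun y => ∫ t in (0 : ℝ)..1 - ∑ k, y k, f (i.insertNth t y)) y := by
    by_cases hy : y ∈ cornerSimplex n
    · rw [Set.indicator_of_mem hy, intervalIntegral.integral_of_le (sub_nonneg.2 hy.2),
        ← integral_Icc_eq_integral_Ioc, ← integral_indicator measurableSet_Icc]
      exact integral_congr_ae <| .of_forall fun t => Set.indicator_eq_indicator
        (insertNth_mem_cornerSimplex.trans (and_iff_right hy)) rfl
    · rw [Set.indicator_of_notMem hy]
      exact integral_eq_zero_of_ae <| .of_forall fun t =>
        Set.indicator_of_notMem (fun ht => hy (insertNth_mem_cornerSimplex.1 ht).1) f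
  have hmp := (volume_preserving_piFinSuccAbove (fun _ : Fin (n + 1) => ℝ) i).symm
  have hemb :=
    (MeasurableEquiv.piFinSuccAbove (fun _ : Fin (n + 1) => ℝ) i).symm.measurableEmbedding
  have hint := (hmp.integrable_comp_emb hemb).2 (hf.integrable_indicator (hmeas _))
  rw [← integral_indicator (hmeas _), ← integral_indicator (hmeas _), ← hmp.integral_comp hemb]
  rw [Measure.volume_eq_prod] at hint ⊢
  exact (integral_prod_symm _ hint).trans (integral_congr_ae (.of_forall hslice))

theorem integrableOn_eval_cornerSimplex (f : MvPolynomial (Fin n) ℝ) :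
    IntegrableOn (fun x => eval x f) (cornerSimplex n) :=
  f.continuous_eval.continuousOn.integrableOn_compact isCompact_cornerSimplex

theorem setIntegral_cornerSimplex_pderiv_eq_zero {i : Fin n} {w : MvPolynomial (Fin n) ℝ}
    (h0 : ∀ x ∈ cornerSimplex n, x i = 0 → eval x w = 0)
    (h1 : ∀ x ∈ cornerSimplex n, ∑ j, x j = 1 → eval x w = 0) :
    ∫ x in cornerSimplex n, eval x (pderiv i w) = 0 := by
  obtain _ | n := n
  · exact i.elim0
  rw [setIntegral_cornerSimplex_succ i (integrableOn_eval_cornerSimplex _)]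
  refine setIntegral_eq_zero_of_forall_eq_zero fun y hy => ?_
  have hlen : 0 ≤ 1 - ∑ k, y k := sub_nonneg.2 hy.2
  have hderiv (t : ℝ) : HasDerivAt (fun s => eval (i.insertNth s y : Fin (n + 1) → ℝ) w)
      (eval (i.insertNth t y : Fin (n + 1) → ℝ) (pderiv i w)) t := by
    simpa only [Fin.update_insertNth] using hasDerivAt_eval_update w (i.insertNth 0 y) i t
  have hcont : Continuous fun t : ℝ => eval (i.insertNth t y : Fin (n + 1) → ℝ) (pderiv i w) :=
    (pderiv i w).continuous_eval.comp
      (Continuous.finInsertNth (A := fun _ => ℝ) i continuous_id continuous_const)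
  rw [intervalIntegral.integral_eq_sub_of_hasDerivAt (fun t _ => hderiv t)
      (hcont.intervalIntegrable _ _),
    h0 _ (insertNth_mem_cornerSimplex.2 ⟨hy, Set.left_mem_Icc.2 hlen⟩) (by simp),
    h1 _ (insertNth_mem_cornerSimplex.2 ⟨hy, Set.right_mem_Icc.2 hlen⟩)
      (by simp [Fin.sum_univ_succAbove _ i]), sub_zero]

theorem setIntegral_cornerSimplex_mul_pderiv (v : MvPolynomial (Fin n) ℝ) {i : Fin n}
    {w : MvPolynomial (Fin n) ℝ} (h0 : ∀ x ∈ cornerSimplex n, x i = 0 → eval x w = 0)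
    (h1 : ∀ x ∈ cornerSimplex n, ∑ j, x j = 1 → eval x w = 0) :
    ∫ x in cornerSimplex n, eval x v * eval x (pderiv i w) =
      -∫ x in cornerSimplex n, eval x (pderiv i v) * eval x w := by
  have hprod : ∫ x in cornerSimplex n, eval x (pderiv i (v * w)) = 0 :=
    setIntegral_cornerSimplex_pderiv_eq_zero
      (fun x hx hxi => by rw [map_mul, h0 x hx hxi, mul_zero])
      (fun x hx hsum => by rw [map_mul, h1 x hx hsum, mul_zero])
  simp only [pderiv_mul, map_add, ← map_mul] at hprod ⊢
  rw [integral_add (integrableOn_eval_cornerSimplex _) (integrableOn_eval_cornerSimplex _)] at hprod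
  linarith

end CornerSimplex

section EdgeBubble

variable {n : ℕ}

/-- The product `λ₀ λᵢ` of the barycentric coordinates at the two ends of the edge of the corner
simplex from the origin to the `i`-th basis vector; it vanishes on all faces not containing that
edge. -/
def edgeBubble (i : Fin n) : MvPolynomial (Fin n) ℝ := X i * (1 - ∑ j, X j)

theorem eval_edgeBubble (i : Fin n) (x : Fin n → ℝ) :
    eval x (edgeBubble i) = x i * (1 - ∑ j, x j) := by
  simp [edgeBubble]

theorem edgeBubble_ne_zero (i : Fin n) : edgeBubble i ≠ 0 := by
  refine mul_ne_zero (X_ne_zero i) fun h => ?_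
  simpa using congrArg (eval (0 : Fin n → ℝ)) h

theorem totalDegree_edgeBubble_le (i : Fin n) : (edgeBubble i).totalDegree ≤ 2 := by
  have hlin : (1 - ∑ j, X j : MvPolynomial (Fin n) ℝ).totalDegree ≤ 1 :=
    (totalDegree_sub _ _).trans <|
      max_le (by simp) (totalDegree_finsetSum_le fun j _ => (totalDegree_X j).le)
  exact (totalDegree_mul _ _).trans (add_le_add (totalDegree_X i).le hlin)

theorem totalDegree_edgeBubble_mul_pderiv_le (i : Fin n) (v : MvPolynomial (Fin n) ℝ) :
    (edgeBubble i * pderiv i v).totalDegree ≤ v.totalDegree + 1 := by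
  by_cases hv : pderiv i v = 0
  · simp [hv]
  · have hmul := totalDegree_mul (edgeBubble i) (pderiv i v)
    have hbubble := totalDegree_edgeBubble_le i
    have hpderiv := totalDegree_pderiv_lt hv
    omega

theorem pderiv_eq_zero_of_setIntegral_mul_pderiv_edgeBubble {i : Fin n}
    {v : MvPolynomial (Fin n) ℝ}
    (h : ∫ x in cornerSimplex n, eval x v * eval x (pderiv i (edgeBubble i * pderiv i v)) = 0) :
    pderiv i v = 0 := by
  rw [setIntegral_cornerSimplex_mul_pderiv v (fun x _ hx => by simp [eval_edgeBubble, hx])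
    (fun x _ hx => by simp [eval_edgeBubble, hx]), neg_eq_zero] at h
  have hnonneg : ∀ x ∈ cornerSimplex n,
      0 ≤ eval x (pderiv i v * (edgeBubble i * pderiv i v)) := by
    intro x hx
    have hbubble : 0 ≤ eval x (edgeBubble i) := by
      rw [eval_edgeBubble]
      exact mul_nonneg (hx.1 i) (sub_nonneg.2 hx.2)
    calc 0 ≤ eval x (edgeBubble i) * eval x (pderiv i v) ^ 2 := by positivity
      _ = eval x (pderiv i v * (edgeBubble i * pderiv i v)) := by simp only [map_mul]; ring
  simp only [← map_mul] at h
  simpa [edgeBubble_ne_zero i] using eq_zero_of_setIntegral_eval_eq_zero isCompact_cornerSimplex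
    nonempty_interior_cornerSimplex hnonneg h

end EdgeBubble

section TestField

variable {n : ℕ}

/-- The normal component of the vector polynomial `Φ` vanishes on every face of the corner simplex.
The outward normals are taken unnormalised: `-eᵢ` on the face `x i = 0` and `∑ i, eᵢ` on the
slanted face. -/
def HasZeroNormalTrace (Φ : Fin n → MvPolynomial (Fin n) ℝ) : Prop :=
  (∀ i, ∀ x ∈ cornerSimplex n, x i = 0 → eval x (Φ i) = 0) ∧
    ∀ x ∈ cornerSimplex n, ∑ i, x i = 1 → ∑ i, eval x (Φ i) = 0

theorem hasZeroNormalTrace_single {i : Fin n} {w : MvPolynomial (Fin n) ℝ}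
    (h0 : ∀ x ∈ cornerSimplex n, x i = 0 → eval x w = 0)
    (h1 : ∀ x ∈ cornerSimplex n, ∑ j, x j = 1 → eval x w = 0) :
    HasZeroNormalTrace (Pi.single i w) := by
  refine ⟨fun j x hx hxj => ?_, fun x hx hsum => Finset.sum_eq_zero fun j _ => ?_⟩ <;>
    obtain rfl | hj := eq_or_ne j i
  · simpa using h0 x hx hxj
  · simp [hj]
  · simpa using h1 x hx hsum
  · simp [hj]

/-- The vector polynomial `λ₀ λᵢ ∂ᵢ v eᵢ`, against whose divergence `v` is tested. -/
def testField (i : Fin n) (v : MvPolynomial (Fin n) ℝ) : Fin n → MvPolynomial (Fin n) ℝ :=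
  Pi.single i (edgeBubble i * pderiv i v)

theorem totalDegree_testField_le (i : Fin n) (v : MvPolynomial (Fin n) ℝ) (j : Fin n) :
    (testField i v j).totalDegree ≤ v.totalDegree + 1 := by
  obtain rfl | hj := eq_or_ne j i
  · simpa [testField] using totalDegree_edgeBubble_mul_pderiv_le j v
  · simp [testField, hj]

theorem hasZeroNormalTrace_testField (i : Fin n) (v : MvPolynomial (Fin n) ℝ) :
    HasZeroNormalTrace (testField i v) :=
  hasZeroNormalTrace_single (fun x _ hx => by simp [eval_edgeBubble, hx])
    (fun x _ hx => by simp [eval_edgeBubble, hx])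

theorem sum_pderiv_testField (i : Fin n) (v : MvPolynomial (Fin n) ℝ) :
    ∑ j, pderiv j (testField i v j) = pderiv i (edgeBubble i * pderiv i v) := by
  rw [Finset.sum_eq_single i (fun j _ hj => by simp [testField, hj]) (by simp), testField,
    Pi.single_eq_same]

end TestField

theorem constant_of_orthogonal_to_div_general {n p : ℕ} {v : MvPolynomial (Fin n) ℝ}
    (hv : v.totalDegree < p)
    (horth : ∀ Φ : Fin n → MvPolynomial (Fin n) ℝ,
      (∀ i, (Φ i).totalDegree ≤ p) → HasZeroNormalTrace Φ →
      ∫ x in cornerSimplex n, eval x v * eval x (∑ i, pderiv i (Φ i)) = 0) :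
    ∃ c : ℝ, v = C c := by
  refine ⟨coeff 0 v, eq_C_of_pderiv_eq_zero fun i =>
    pderiv_eq_zero_of_setIntegral_mul_pderiv_edgeBubble ?_⟩
  rw [← sum_pderiv_testField]
  exact horth (testField i v) (fun j => (totalDegree_testField_le i v j).trans hv)
    (hasZeroNormalTrace_testField i v)

theorem lam_zero_apply (x : Fin 3 → ℝ) : lam 0 x = 1 - ∑ i, x i := by
  rw [Fin.sum_univ_three, ← sub_sub, ← sub_sub]
  rfl

theorem lam_succ_apply (j : Fin 3) (x : Fin 3 → ℝ) : lam j.succ x = x j := by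
  fin_cases j <;> rfl

theorem Ktet_eq_cornerSimplex : Ktet = cornerSimplex 3 := by
  ext x
  simp only [Ktet, cornerSimplex, Set.mem_ofPred_eq, Fin.forall_fin_succ (n := 3), lam_zero_apply,
    lam_succ_apply, sub_nonneg, and_comm]

theorem normalVanish_iff_hasZeroNormalTrace {Φ : Fin 3 → MvPolynomial (Fin 3) ℝ} :
    normalVanish Φ ↔ HasZeroNormalTrace Φ := by
  have hslanted (x : Fin 3 → ℝ) :
      ∑ i, eval x (Φ i) * normalK 0 i = 0 ↔ ∑ i, eval x (Φ i) = 0 := by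
    simp [normalK, ← Finset.sum_mul]
  have hcoordinate (x : Fin 3 → ℝ) (j : Fin 3) :
      ∑ i, eval x (Φ i) * normalK j.succ i = 0 ↔ eval x (Φ j) = 0 := by
    fin_cases j <;> simp [normalK, Fin.sum_univ_three]
  simp only [normalVanish, HasZeroNormalTrace, faceK, Ktet_eq_cornerSimplex, Set.mem_ofPred_eq,
    and_imp, Fin.forall_fin_succ (n := 3), lam_zero_apply, lam_succ_apply, hslanted, hcoordinate,
    sub_eq_zero, eq_comm (a := (1 : ℝ))]
  exact and_comm

/-- if v ∈ P_{p-1} is L²(K)-orthogonal to div Φ for every Φ ∈ (P_p)³ with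
vanishing normal component on ∂K, then v is constant on K. -/
theorem constant_of_orthogonal_to_div (p : ℕ) (hp : 1 ≤ p)
    (v : MvPolynomial (Fin 3) ℝ) (hv : v.totalDegree ≤ p - 1)
    (horth : ∀ Φ : Fin 3 → MvPolynomial (Fin 3) ℝ,
      (∀ i, (Φ i).totalDegree ≤ p) → normalVanish Φ →
      ∫ x in Ktet, MvPolynomial.eval x v * MvPolynomial.eval x (divP Φ) = 0) :
    ∃ c : ℝ, ∀ x ∈ Ktet, MvPolynomial.eval x v = c := by
  obtain ⟨c, rfl⟩ := constant_of_orthogonal_to_div_general (Nat.lt_of_le_pred hp hv)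
    fun Φ hdegree htrace =>
      Ktet_eq_cornerSimplex ▸ horth Φ hdegree (normalVanish_iff_hasZeroNormalTrace.2 htrace)
  exact ⟨c, fun x _ => eval_C c⟩
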